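/- Let G be a ternary semigroup and let X ⊆ Hom_TS(G,3) be nonempty and closed under the pointwise product of any three of its members. Endow 3 = {-1,0,1} with the discrete topology, 3^G with the product topology, and Hom_TS(G,3) with the subspace topology (the constructible topology). Then X separates points of G (i.e., (X,G) is a q-fan) if and only if X is dense in Hom_TS(G,3). In particular, if X is closed in Hom_TS(G,3), then X = Hom_TS(G,3). -/

import Mathlib

universe u

/-- A ternary semigroup: a commutative monoid with distinguished elements `0` (`tzero`)
and `-1` (`tneg`) satisfying `x³ = x`, `-1 ≠ 1`, `(-1)(-1) = 1`, `x·0 = 0`, and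
`x = -1·x → x = 0`. -/
class TernarySemigroup (G : Type u) extends CommMonoid G where
  tzero : G
  tneg : G
  cube : ∀ x : G, x * x * x = x
  tneg_ne_one : tneg ≠ 1
  tneg_mul_tneg : tneg * tneg = 1
  mul_tzero : ∀ x : G, x * tzero = tzero
  eq_tzero_of_eq_tneg_mul : ∀ x : G, x = tneg * x → x = tzero

open TernarySemigroup

/-- A TS-character of `G` with values in the ternary semigroup `3 = {-1,0,1}` (`SignType`). -/
def IsTSChar {G : Type u} [TernarySemigroup G] (h : G → SignType) : Prop :=
  (∀ x y : G, h (x * y) = h x * h y) ∧ h 1 = 1 ∧ h (tzero : G) = 0 ∧ h (tneg : G) = -1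

/-- The discrete topology on the ternary semigroup `3 = SignType`; `G → SignType` then
carries the product topology and the character space the subspace (constructible) topology. -/
instance : TopologicalSpace SignType := ⊥

instance : DiscreteTopology SignType := ⟨rfl⟩

/-!
For a dense `X`, agreement of members of `X` with an arbitrary character on `{a, b}` reduces
separation by `X` to separation by all characters. If one of `a`, `b` does not divide the other, a
character supported on the divisors of the latter works; otherwise `a² = b²`, so `a` and `b` lie in
one maximal subgroup, a vector space over the field with two elements, and linear functionals
finish the argument.

Conversely, let `X` separate points and let `g` be a character. Separating `a` from `-a²`, and `a`
from `a z²`, shows that some member of `X` agrees with `g` at any given point where `g ≠ 0`, and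
that some member vanishes at a given zero of `g` but not at a given point where `g ≠ 0`. Ternary
products then combine these: `y h h` keeps the nonzero values of `y` where `h ≠ 0` and acquires the
zeros of `h`, while for two points `s`, `t` one takes members agreeing with `g` at `t s²`, `s t²`
and `t s`; one of the three, or else their product, agrees with `g` at both `s` and `t`.
-/

lemma dense_subtype_pi_iff_forall_finset {ι : Type*} {π : ι → Type*}
    [∀ i, TopologicalSpace (π i)] [∀ i, DiscreteTopology (π i)] {p : (∀ i, π i) → Prop}
    {X : Set {f // p f}} :
    Dense X ↔ ∀ (g : {f // p f}) (I : Finset ι), ∃ h ∈ X, ∀ i ∈ I, h.1 i = g.1 i := by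
  refine ⟨fun hX g I => ?_, fun hX => dense_iff_inter_open.2 ?_⟩
  · have hopen : IsOpen ((I : Set ι).pi fun i => {g.1 i}) :=
      isOpen_set_pi I.finite_toSet fun i _ => isOpen_discrete _
    obtain ⟨h, hI, hh⟩ := hX.inter_open_nonempty _ (hopen.preimage continuous_subtype_val)
      ⟨g, fun i _ => rfl⟩
    exact ⟨h, hh, hI⟩
  · rintro U hU ⟨g, hgU⟩
    obtain ⟨V, hV, rfl⟩ := isOpen_induced_iff.1 hU
    obtain ⟨I, u, hu, hIV⟩ := isOpen_pi_iff.1 hV g.1 hgU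
    obtain ⟨h, hh, hI⟩ := hX g I
    exact ⟨h, hIV fun i hi => hI i hi ▸ (hu i hi).2, hh⟩

lemma sign_mul_self_eq_one : ∀ {a : SignType}, a ≠ 0 → a * a = 1 := by decide

lemma sign_mul_mul_self_eq : ∀ a : SignType, a * a * a = a := by decide

lemma sign_mul_eq_one_of_ne :
    ∀ {a b c : SignType}, a ≠ 0 → b ≠ 0 → c ≠ 0 → a ≠ c → b ≠ c → a * b = 1 := by decide

lemma sign_eq_and_ne_zero_of_mul_mul_self_eq :
    ∀ {a b c d : SignType}, c ≠ 0 → d ≠ 0 → a * b * b = c * d * d → a = c ∧ b ≠ 0 := by decide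

section TernaryClosed

/-- A set closed under products of any three of its members. -/
def IsTernaryClosed {S : Type*} [Mul S] (X : Set S) : Prop :=
  ∀ x ∈ X, ∀ y ∈ X, ∀ z ∈ X, x * y * z ∈ X

variable {M : Type*} {X : Set (M → SignType)} {g : M → SignType}

lemma IsTernaryClosed.sep_forall_finset_eq (hX : IsTernaryClosed X) (I : Finset M) :
    IsTernaryClosed {h ∈ X | ∀ i ∈ I, h i = g i} := by
  rintro x ⟨hx, hxI⟩ y ⟨hy, hyI⟩ z ⟨hz, hzI⟩
  refine ⟨hX x hx y hy z hz, fun i hi => ?_⟩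
  simp only [Pi.mul_apply, hxI i hi, hyI i hi, hzI i hi, sign_mul_mul_self_eq]

lemma IsTernaryClosed.exists_eq_and_forall_zeros (hX : IsTernaryClosed X)
    (hpoint : ∀ t, g t ≠ 0 → ∃ h ∈ X, h t = g t)
    (hzero : ∀ t z, g t ≠ 0 → g z = 0 → ∃ h ∈ X, h t ≠ 0 ∧ h z = 0)
    (Z : Finset M) (hZ : ∀ z ∈ Z, g z = 0) {t : M} (ht : g t ≠ 0) :
    ∃ h ∈ X, h t = g t ∧ ∀ z ∈ Z, h z = 0 := by
  classical
  induction Z using Finset.induction_on with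
  | empty => simpa using hpoint t ht
  | insert z Z _ ih =>
    rw [Finset.forall_mem_insert] at hZ
    obtain ⟨y, hy, hyt, hyZ⟩ := ih hZ.2
    obtain ⟨h, hh, hht, hhz⟩ := hzero t z ht hZ.1
    refine ⟨y * h * h, hX y hy h hh h hh, ?_, Finset.forall_mem_insert _ _ _ |>.2 ⟨?_, ?_⟩⟩
    · simp only [Pi.mul_apply, mul_assoc, sign_mul_self_eq_one hht, hyt, mul_one]
    · simp only [Pi.mul_apply, hhz, mul_zero]
    · intro x hx
      simp only [Pi.mul_apply, hyZ x hx, zero_mul]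

variable [Mul M]

lemma IsTernaryClosed.exists_eq_and_eq (hX : IsTernaryClosed X)
    (hmul : ∀ h ∈ X, ∀ x y, h (x * y) = h x * h y) (hg : ∀ x y, g (x * y) = g x * g y)
    (hpoint : ∀ t, g t ≠ 0 → ∃ h ∈ X, h t = g t) {s t : M} (hs : g s ≠ 0) (ht : g t ≠ 0) :
    ∃ h ∈ X, h s = g s ∧ h t = g t := by
  obtain ⟨x, hx, hxts⟩ := hpoint (t * s * s) (by simp only [hg, ne_eq, mul_eq_zero]; tauto)
  obtain ⟨y, hy, hyst⟩ := hpoint (s * t * t) (by simp only [hg, ne_eq, mul_eq_zero]; tauto)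
  obtain ⟨z, hz, hzst⟩ := hpoint (s * t) (by simp only [hg, ne_eq, mul_eq_zero]; tauto)
  simp only [hg, hmul x hx, hmul y hy, hmul z hz] at hxts hyst hzst
  obtain ⟨hxt, hxs⟩ := sign_eq_and_ne_zero_of_mul_mul_self_eq ht hs hxts
  obtain ⟨hys, hyt⟩ := sign_eq_and_ne_zero_of_mul_mul_self_eq hs ht hyst
  obtain ⟨hzs, hzt⟩ : z s ≠ 0 ∧ z t ≠ 0 := mul_ne_zero_iff.1 (hzst ▸ mul_ne_zero hs ht)
  by_cases hxs' : x s = g s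
  · exact ⟨x, hx, hxs', hxt⟩
  by_cases hyt' : y t = g t
  · exact ⟨y, hy, hys, hyt'⟩
  by_cases hzs' : z s = g s
  · exact ⟨z, hz, hzs', mul_left_cancel₀ hs (hzs' ▸ hzst)⟩
  have hzt' : z t ≠ g t := fun h => hzs' (mul_right_cancel₀ ht (h ▸ hzst))
  refine ⟨x * y * z, hX x hx y hy z hz, ?_, ?_⟩
  · rw [Pi.mul_apply, Pi.mul_apply, mul_right_comm,
      sign_mul_eq_one_of_ne hxs hzs hs hxs' hzs', one_mul, hys]
  · rw [Pi.mul_apply, Pi.mul_apply, mul_assoc,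
      sign_mul_eq_one_of_ne hyt hzt ht hyt' hzt', mul_one, hxt]

lemma IsTernaryClosed.exists_forall_nonzeros_eq (hX : IsTernaryClosed X)
    (hmul : ∀ h ∈ X, ∀ x y, h (x * y) = h x * h y) (hg : ∀ x y, g (x * y) = g x * g y)
    (hpoint : ∀ t, g t ≠ 0 → ∃ h ∈ X, h t = g t) (F : Finset M) (hF : ∀ s ∈ F, g s ≠ 0)
    {t : M} (ht : g t ≠ 0) :
    ∃ h ∈ X, h t = g t ∧ ∀ s ∈ F, h s = g s := by
  classical
  induction F using Finset.induction_on generalizing t with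
  | empty => simpa using hpoint t ht
  | insert s F _ ih =>
    rw [Finset.forall_mem_insert] at hF
    obtain ⟨h, ⟨hh, hhF⟩, hhs, hht⟩ := (hX.sep_forall_finset_eq F).exists_eq_and_eq
      (fun h hh => hmul h hh.1) hg
      (fun t ht => let ⟨h, hh, hht, hhF⟩ := ih hF.2 ht; ⟨h, ⟨hh, hhF⟩, hht⟩) hF.1 ht
    exact ⟨h, hh, hht, Finset.forall_mem_insert _ _ _ |>.2 ⟨hhs, hhF⟩⟩

lemma IsTernaryClosed.exists_forall_finset_eq (hX : IsTernaryClosed X)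
    (hmul : ∀ h ∈ X, ∀ x y, h (x * y) = h x * h y) (hg : ∀ x y, g (x * y) = g x * g y)
    (hpoint : ∀ t, g t ≠ 0 → ∃ h ∈ X, h t = g t)
    (hzero : ∀ t z, g t ≠ 0 → g z = 0 → ∃ h ∈ X, h t ≠ 0 ∧ h z = 0)
    {t : M} (ht : g t ≠ 0) (I : Finset M) :
    ∃ h ∈ X, ∀ i ∈ I, h i = g i := by
  have hZ : ∀ z ∈ I.filter (g · = 0), g z = 0 := fun z hz => (Finset.mem_filter.1 hz).2
  have hpointZ : ∀ s, g s ≠ 0 → ∃ h ∈ {h ∈ X | ∀ z ∈ I.filter (g · = 0), h z = g z},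
      h s = g s := by
    intro s hs
    obtain ⟨h, hh, hhs, hhZ⟩ := hX.exists_eq_and_forall_zeros hpoint hzero _ hZ hs
    exact ⟨h, ⟨hh, fun z hz => (hhZ z hz).trans (hZ z hz).symm⟩, hhs⟩
  obtain ⟨h, ⟨hh, hhZ⟩, -, hhF⟩ := (hX.sep_forall_finset_eq _).exists_forall_nonzeros_eq
    (fun h hh => hmul h hh.1) hg hpointZ (I.filter (g · ≠ 0))
    (fun s hs => (Finset.mem_filter.1 hs).2) ht
  refine ⟨h, hh, fun i hi => ?_⟩
  by_cases hgi : g i = 0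
  · exact hhZ i (Finset.mem_filter.2 ⟨hi, hgi⟩)
  · exact hhF i (Finset.mem_filter.2 ⟨hi, hgi⟩)

end TernaryClosed

lemma exists_signHom_eq_neg_one {V : Type*} [CommGroup V] (hV : ∀ x : V, x * x = 1) {u : V}
    (hu : u ≠ 1) : ∃ χ : V →* SignType, χ u = -1 := by
  let : Module (ZMod 2) (Additive V) :=
    AddCommGroup.zmodModule fun x => (two_nsmul x).trans (hV x.toMul)
  obtain ⟨f, hf⟩ := Module.Projective.exists_dual_eq_one (ZMod 2)
    (show Additive.ofMul u ≠ 0 from hu)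
  let ε : Multiplicative (ZMod 2) →* SignType :=
    { toFun := fun c => if c.toAdd = 0 then 1 else -1
      map_one' := rfl
      map_mul' := by decide }
  refine ⟨ε.comp (AddMonoidHom.toMultiplicativeRight f.toAddMonoidHom), ?_⟩
  change (if f (Additive.ofMul u) = 0 then (1 : SignType) else -1) = -1
  rw [hf]
  rfl

lemma monoidHom_group_ne_zero {V M₀ : Type*} [Group V] [MonoidWithZero M₀] [Nontrivial M₀]
    (χ : V →* M₀) (x : V) : χ x ≠ 0 :=
  (Group.isUnit x |>.map χ).ne_zero

lemma exists_signHom_eq_neg_one_and_eq_neg_one {V : Type*} [CommGroup V]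
    (hV : ∀ x : V, x * x = 1) {u v : V} (hu : u ≠ 1) (hv : v ≠ 1) :
    ∃ χ : V →* SignType, χ u = -1 ∧ χ v = -1 := by
  have eq_one_of_ne : ∀ {a : SignType}, a ≠ 0 → a ≠ -1 → a = 1 := by decide
  obtain ⟨χ, hχu⟩ := exists_signHom_eq_neg_one hV hu
  obtain ⟨ψ, hψv⟩ := exists_signHom_eq_neg_one hV hv
  by_cases hχv : χ v = -1
  · exact ⟨χ, hχu, hχv⟩
  by_cases hψu : ψ u = -1
  · exact ⟨ψ, hψu, hψv⟩
  refine ⟨χ * ψ, ?_, ?_⟩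
  · rw [MonoidHom.mul_apply, hχu, eq_one_of_ne (monoidHom_group_ne_zero ψ u) hψu, mul_one]
  · rw [MonoidHom.mul_apply, hψv, eq_one_of_ne (monoidHom_group_ne_zero χ v) hχv, one_mul]

section Characters

variable {G : Type u} [TernarySemigroup G]

lemma mul_self_ne_tzero {a : G} (ha : a ≠ tzero) : a * a ≠ tzero := by
  intro h
  rw [← cube a, h, mul_comm, mul_tzero] at ha
  exact ha rfl

lemma tneg_mul_mul_tneg_mul (x y : G) : tneg * x * (tneg * y) = x * y := by
  rw [mul_mul_mul_comm, tneg_mul_tneg, one_mul]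

lemma mul_self_mul_mul_self (a : G) : a * a * (a * a) = a * a := by
  rw [← mul_assoc, cube]

lemma dvd_iff_mul_self_mul_eq {x a : G} : x ∣ a ↔ x * x * a = a := by
  refine ⟨?_, fun h => ⟨x * a, by rw [← mul_assoc, h]⟩⟩
  rintro ⟨c, rfl⟩
  rw [← mul_assoc, cube]

lemma mul_dvd_iff_dvd_and_dvd {x y a : G} : x * y ∣ a ↔ x ∣ a ∧ y ∣ a := by
  refine ⟨fun h => ⟨dvd_of_mul_right_dvd h, dvd_of_mul_left_dvd h⟩, fun ⟨hx, hy⟩ => ?_⟩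
  rw [dvd_iff_mul_self_mul_eq] at hx hy ⊢
  rw [mul_mul_mul_comm x y x y, mul_assoc, hy, hx]

lemma mul_self_eq_mul_self_of_dvd_of_dvd {a b : G} (hab : a ∣ b) (hba : b ∣ a) :
    a * a = b * b := by
  rw [dvd_iff_mul_self_mul_eq] at hab hba
  calc a * a = b * b * a * a := by rw [hba]
    _ = a * a * b * b := by rw [mul_assoc, mul_comm, ← mul_assoc]
    _ = b * b := by rw [hab]

/-- The maximal subgroup of `G` containing `a` (its Green `H`-class): the elements with the same
square as `a`. Its unit is the idempotent `a * a`, and every element is its own inverse. -/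
@[ext]
structure HClass (a : G) where
  val : G
  val_mul_val : val * val = a * a

namespace HClass

instance (a : G) : CommGroup (HClass a) where
  mul x y := ⟨x.val * y.val, by
    rw [mul_mul_mul_comm, x.val_mul_val, y.val_mul_val, mul_self_mul_mul_self]⟩
  one := ⟨a * a, mul_self_mul_mul_self a⟩
  inv x := x
  mul_assoc x y z := HClass.ext (mul_assoc x.val y.val z.val)
  mul_comm x y := HClass.ext (mul_comm x.val y.val)
  one_mul x := HClass.ext <| show a * a * x.val = x.val by rw [← x.val_mul_val, cube]
  mul_one x := HClass.ext <| show x.val * (a * a) = x.val by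
    rw [← x.val_mul_val, ← mul_assoc, cube]
  inv_mul_cancel x := HClass.ext x.val_mul_val

variable {a : G}

lemma mul_self_eq_one (x : HClass a) : x * x = 1 := HClass.ext x.val_mul_val

/-- The retraction `x ↦ x * (a * a)` of the divisors of `a` onto `HClass a`. -/
def ofDvd {x : G} (hx : x ∣ a) : HClass a where
  val := x * (a * a)
  val_mul_val := by
    rw [mul_mul_mul_comm, mul_self_mul_mul_self, ← mul_assoc, dvd_iff_mul_self_mul_eq.1 hx]

lemma ofDvd_mul {x y : G} (hx : x ∣ a) (hy : y ∣ a) :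
    ofDvd (mul_dvd_iff_dvd_and_dvd.2 ⟨hx, hy⟩) = ofDvd hx * ofDvd hy :=
  HClass.ext <| show x * y * (a * a) = x * (a * a) * (y * (a * a)) by
    rw [mul_mul_mul_comm x (a * a), mul_self_mul_mul_self]

open Classical in
/-- The extension of a character of `HClass a` to `G`, by zero on the elements not dividing `a`. -/
noncomputable def extend (χ : HClass a →* SignType) (x : G) : SignType :=
  if hx : x ∣ a then χ (ofDvd hx) else 0

lemma extend_of_dvd (χ : HClass a →* SignType) {x : G} (hx : x ∣ a) :
    extend χ x = χ (ofDvd hx) := dif_pos hx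

lemma extend_eq_zero_iff (χ : HClass a →* SignType) {x : G} :
    extend χ x = 0 ↔ ¬ x ∣ a := by
  by_cases hx : x ∣ a
  · simp only [extend_of_dvd χ hx, monoidHom_group_ne_zero, hx, not_true]
  · exact iff_of_true (dif_neg hx) hx

lemma extend_mul (χ : HClass a →* SignType) (x y : G) :
    extend χ (x * y) = extend χ x * extend χ y := by
  by_cases hxy : x ∣ a ∧ y ∣ a
  · rw [extend_of_dvd χ (mul_dvd_iff_dvd_and_dvd.2 hxy), ofDvd_mul hxy.1 hxy.2, map_mul,
      extend_of_dvd χ hxy.1, extend_of_dvd χ hxy.2]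
  · rw [(extend_eq_zero_iff χ).2 (mul_dvd_iff_dvd_and_dvd.not.2 hxy), eq_comm, mul_eq_zero,
      extend_eq_zero_iff, extend_eq_zero_iff]
    exact not_and_or.1 hxy

lemma extend_val (χ : HClass a →* SignType) (u : HClass a) : extend χ u.val = χ u := by
  have hu : u.val ∣ a := dvd_iff_mul_self_mul_eq.2 (by rw [u.val_mul_val, cube])
  rw [extend_of_dvd χ hu]
  exact congrArg χ (mul_one u)

variable (a) in
/-- The element `-a²`, playing the role of `-1` in `HClass a`. -/
def negOne : HClass a := ⟨tneg * (a * a), by rw [tneg_mul_mul_tneg_mul, mul_self_mul_mul_self]⟩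

lemma negOne_ne_one (ha : a ≠ tzero) : negOne a ≠ 1 := fun h =>
  mul_self_ne_tzero ha (eq_tzero_of_eq_tneg_mul _ (congrArg HClass.val h).symm)

lemma isTSChar_extend (ha : a ≠ tzero) {χ : HClass a →* SignType} (hχ : χ (negOne a) = -1) :
    IsTSChar (extend χ) := by
  have tneg_dvd : tneg ∣ a := dvd_iff_mul_self_mul_eq.2 (by rw [tneg_mul_tneg, one_mul])
  refine ⟨extend_mul χ, ?_, (extend_eq_zero_iff χ).2 ?_, ?_⟩
  · rw [extend_of_dvd χ (one_dvd a), ← map_one χ]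
    exact congrArg χ (HClass.ext (one_mul _))
  · rintro ⟨c, rfl⟩
    exact ha (by rw [mul_comm, mul_tzero])
  · rw [extend_of_dvd χ tneg_dvd, ← hχ]
    rfl

end HClass

open HClass

lemma exists_isTSChar_ne_of_not_dvd {a b : G} (hb : ¬ b ∣ a) :
    ∃ h : G → SignType, IsTSChar h ∧ h a ≠ h b := by
  have ha : a ≠ tzero := by
    rintro rfl
    exact hb ⟨tzero, (mul_tzero b).symm⟩
  obtain ⟨χ, hχ⟩ := exists_signHom_eq_neg_one mul_self_eq_one (negOne_ne_one ha)
  refine ⟨extend χ, isTSChar_extend ha hχ, ?_⟩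
  rw [(extend_eq_zero_iff χ).2 hb, ne_eq, extend_eq_zero_iff, not_not]

lemma exists_isTSChar_ne_of_mul_self_eq {a b : G} (hab : a ≠ b) (hsq : b * b = a * a) :
    ∃ h : G → SignType, IsTSChar h ∧ h a ≠ h b := by
  have ha : a ≠ tzero := by
    rintro rfl
    rw [← cube b, hsq, mul_tzero, mul_comm, mul_tzero] at hab
    exact hab rfl
  let u : HClass a := ⟨a, rfl⟩
  let v : HClass a := ⟨b, hsq⟩
  have huv : u * v ≠ 1 := fun h => hab <| congrArg HClass.val <|
    show u = v from mul_right_cancel (h.trans (mul_self_eq_one v).symm)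
  obtain ⟨χ, hχuv, hχ⟩ :=
    exists_signHom_eq_neg_one_and_eq_neg_one mul_self_eq_one huv (negOne_ne_one ha)
  refine ⟨extend χ, isTSChar_extend ha hχ, fun h => ?_⟩
  have hχ_eq : χ u = χ v := by rw [← extend_val, ← extend_val]; exact h
  rw [map_mul, hχ_eq, ← map_mul, mul_self_eq_one, map_one] at hχuv
  exact absurd hχuv (by decide)

lemma separatesPoints_isTSChar : {h : G → SignType | IsTSChar h}.SeparatesPoints := by
  intro a b hab
  by_cases hb : b ∣ a
  · by_cases ha : a ∣ b
    · exact exists_isTSChar_ne_of_mul_self_eq hab (mul_self_eq_mul_self_of_dvd_of_dvd hb ha)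
    · obtain ⟨h, hh, hne⟩ := exists_isTSChar_ne_of_not_dvd ha
      exact ⟨h, hh, hne.symm⟩
  · exact exists_isTSChar_ne_of_not_dvd hb

end Characters

section Separating

variable {G : Type u} [TernarySemigroup G] {X : Set (G → SignType)} {g : G → SignType}

lemma exists_mem_eq_one_of_separatesPoints (hX : ∀ h ∈ X, IsTSChar h) (hsep : X.SeparatesPoints)
    (hg : IsTSChar g) {a : G} (ha : g a = 1) : ∃ h ∈ X, h a = 1 := by
  have ne : a ≠ tneg * (a * a) := by
    intro h
    have := congrArg g h
    rw [hg.1, hg.1, hg.2.2.2, ha] at this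
    exact absurd this (by decide)
  have eq_one_of_ne_neg_sq : ∀ {s : SignType}, s ≠ -1 * (s * s) → s = 1 := by decide
  obtain ⟨h, hh, hne⟩ := hsep ne
  rw [(hX h hh).1, (hX h hh).1, (hX h hh).2.2.2] at hne
  exact ⟨h, hh, eq_one_of_ne_neg_sq hne⟩

lemma exists_mem_eq_of_separatesPoints (hX : ∀ h ∈ X, IsTSChar h) (hsep : X.SeparatesPoints)
    (hg : IsTSChar g) {a : G} (ha : g a ≠ 0) : ∃ h ∈ X, h a = g a := by
  have map_tneg_mul : ∀ {h : G → SignType}, IsTSChar h → h (tneg * a) = -h a := by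
    intro h hh
    rw [hh.1, hh.2.2.2, neg_one_mul]
  obtain hga | hga : g a = 1 ∨ g a = -1 := by
    revert ha
    generalize g a = s
    revert s
    decide
  · exact hga ▸ exists_mem_eq_one_of_separatesPoints hX hsep hg hga
  · obtain ⟨h, hh, hha⟩ := exists_mem_eq_one_of_separatesPoints hX hsep hg
      (a := tneg * a) (by rw [map_tneg_mul hg, hga, neg_neg])
    rw [map_tneg_mul (hX h hh), neg_eq_iff_eq_neg] at hha
    exact ⟨h, hh, hha.trans hga.symm⟩

lemma exists_mem_ne_zero_and_eq_zero_of_separatesPoints (hX : ∀ h ∈ X, IsTSChar h)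
    (hsep : X.SeparatesPoints) (hg : IsTSChar g) {a z : G} (ha : g a ≠ 0) (hz : g z = 0) :
    ∃ h ∈ X, h a ≠ 0 ∧ h z = 0 := by
  have ne : a ≠ a * (z * z) := by
    intro h
    rw [h, hg.1, hg.1, hz, mul_zero, mul_zero] at ha
    exact ha rfl
  have ne_zero_and_eq_zero : ∀ {s t : SignType}, s ≠ s * (t * t) → s ≠ 0 ∧ t = 0 := by decide
  obtain ⟨h, hh, hne⟩ := hsep ne
  rw [(hX h hh).1, (hX h hh).1] at hne
  exact ⟨h, hh, ne_zero_and_eq_zero hne⟩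

lemma IsTernaryClosed.exists_forall_finset_eq_of_separatesPoints (hX3 : IsTernaryClosed X)
    (hX : ∀ h ∈ X, IsTSChar h) (hsep : X.SeparatesPoints) (hg : IsTSChar g) (I : Finset G) :
    ∃ h ∈ X, ∀ i ∈ I, h i = g i :=
  hX3.exists_forall_finset_eq (fun h hh => (hX h hh).1) hg.1
    (fun _ ht => exists_mem_eq_of_separatesPoints hX hsep hg ht)
    (fun _ _ ht hz => exists_mem_ne_zero_and_eq_zero_of_separatesPoints hX hsep hg ht hz)
    (t := 1) (by rw [hg.2.1]; exact one_ne_zero) I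

end Separating

/-- A nonempty set of TS-characters closed under products of any three of its members is a
q-fan (i.e., separates points) iff it is dense in the character space with the constructible
topology; in particular, if in addition it is closed, it is the whole character space. -/
theorem stmt_13 (G : Type u) [TernarySemigroup G]
    (X : Set {h : G → SignType // IsTSChar h}) (hne : X.Nonempty)
    (h3 : ∀ h₁ ∈ X, ∀ h₂ ∈ X, ∀ h₃ ∈ X,
      ∃ h ∈ X, (h : G → SignType) = (h₁ : G → SignType) * (h₂ : G → SignType) * (h₃ : G → SignType)) :
    ((∀ a b : G, a ≠ b → ∃ h ∈ X, (h : G → SignType) a ≠ (h : G → SignType) b) ↔ Dense X) ∧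
    ((∀ a b : G, a ≠ b → ∃ h ∈ X, (h : G → SignType) a ≠ (h : G → SignType) b) →
      IsClosed X → X = Set.univ) := by
  have dense_of_separates :
      (∀ a b : G, a ≠ b → ∃ h ∈ X, (h : G → SignType) a ≠ (h : G → SignType) b) → Dense X := by
    intro hsep
    have hX3 : IsTernaryClosed (Subtype.val '' X) := by
      rintro _ ⟨x, hx, rfl⟩ _ ⟨y, hy, rfl⟩ _ ⟨z, hz, rfl⟩
      exact h3 x hx y hy z hz
    have hXsep : (Subtype.val '' X).SeparatesPoints := fun a b hab =>
      Set.exists_mem_image.2 (hsep a b hab)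
    have hXchar : ∀ h ∈ Subtype.val '' X, IsTSChar h := Set.forall_mem_image.2 fun h _ => h.2
    exact dense_subtype_pi_iff_forall_finset.2 fun g I => Set.exists_mem_image.1 <|
      hX3.exists_forall_finset_eq_of_separatesPoints hXchar hXsep g.2 I
  refine ⟨⟨dense_of_separates, fun hdense a b hab => ?_⟩, fun hsep hclosed => ?_⟩
  · classical
    obtain ⟨g, hg, hgab⟩ := separatesPoints_isTSChar hab
    obtain ⟨h, hh, hI⟩ := dense_subtype_pi_iff_forall_finset.1 hdense ⟨g, hg⟩ {a, b}
    exact ⟨h, hh, by rwa [hI a (by simp), hI b (by simp)]⟩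
  · rw [← hclosed.closure_eq, (dense_of_separates hsep).closure_eq]
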